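/- Fix positive reals p₋₁, p₀, p₁, let P(u) = p₋₁u⁻¹ + p₀ + p₁u, τ = √(p₋₁/p₁), ρ = 1/(p₀ + 2√(p₋₁p₁)), and C = √(2P(τ)/P″(τ)) where P″(τ) = 2p₋₁/τ³. Define for complex z the small branch u₁(z) = (1 − p₀z − √((1−p₀z)² − 4p₋₁p₁z²))/(2p₁z) using principal branches. Then there exist an open neighborhood U ⊆ ℂ of ρ and functions a, b analytic on U such that a(ρ) = τ, b(ρ) = −C, and u₁(z) = a(z) + b(z)·√(1 − z/ρ) for every z ∈ U not lying on the real ray [ρ, ∞). -/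

import Mathlib

/-!
Writing `s = √(p₋₁p₁)`, the discriminant `D(z) = (1 - p₀z)² - 4p₋₁p₁z²` factors as
`(1 - (p₀ + 2s)z)(1 - (p₀ - 2s)z)`, and `ρ` is the zero of the first factor, while the second one
is positive at `ρ`. So the claim amounts to distributing the principal square root over this
product. That is legitimate where the arguments of the two factors add up to a number in `(-π, π]`.
As `D` has real coefficients and degree two, `Im D(z) = D'(Re z) Im z`; hence, on the region
`D'(Re z) < 0`, which contains `ρ`, `D(z)` stays on the same side of the real axis as its first
factor, and this forces the arguments to add up.
-/

theorem mul_cpow_of_arg_add_arg_mem_Ioc {x y : ℂ}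
    (h : x.arg + y.arg ∈ Set.Ioc (-Real.pi) Real.pi) (s : ℂ) : (x * y) ^ s = x ^ s * y ^ s := by
  rcases eq_or_ne s 0 with rfl | hs
  · simp
  rcases eq_or_ne x 0 with rfl | hx
  · simp [hs]
  rcases eq_or_ne y 0 with rfl | hy
  · simp [hs]
  rw [Complex.cpow_def_of_ne_zero (mul_ne_zero hx hy), Complex.cpow_def_of_ne_zero hx,
    Complex.cpow_def_of_ne_zero hy, Complex.log_mul hx hy h, add_mul, Complex.exp_add]

theorem norm_mul_norm_mul_sin_arg_add_arg (x y : ℂ) :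
    ‖x‖ * ‖y‖ * Real.sin (x.arg + y.arg) = (x * y).im := by
  rw [Real.sin_add, Complex.mul_im, ← Complex.norm_mul_cos_arg x, ← Complex.norm_mul_sin_arg x,
    ← Complex.norm_mul_cos_arg y, ← Complex.norm_mul_sin_arg y]
  ring

/-- If the sum of the arguments left `(-π, π]`, then its sine, and with it `(x * y).im`, would have
the wrong sign. -/
theorem arg_add_arg_mem_Ioc_of_im_mul_neg_iff {x y : ℂ} (hy : 0 < y.re)
    (him : (x * y).im < 0 ↔ x.im < 0) : x.arg + y.arg ∈ Set.Ioc (-Real.pi) Real.pi := by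
  obtain ⟨hy₁, hy₂⟩ := abs_lt.1 (Complex.abs_arg_lt_pi_div_two_iff.2 (Or.inl hy))
  have hx₁ := Complex.neg_pi_lt_arg x
  have hx₂ := Complex.arg_le_pi x
  have hsin := norm_mul_norm_mul_sin_arg_add_arg x y
  rcases lt_or_ge x.im 0 with hx | hx
  · have harg : x.arg < 0 := Complex.arg_neg_iff.2 hx
    refine ⟨?_, by linarith⟩
    by_contra! hle
    have hsin_nonneg : 0 ≤ Real.sin (x.arg + y.arg) := by
      rw [← Real.sin_add_two_pi]
      exact Real.sin_nonneg_of_nonneg_of_le_pi (by linarith) (by linarith)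
    exact (him.2 hx).not_ge (hsin ▸ by positivity)
  · have harg : 0 ≤ x.arg := Complex.arg_nonneg_iff.2 hx
    refine ⟨by linarith, ?_⟩
    by_contra! hlt
    have hx0 : x ≠ 0 := by
      rintro rfl
      rw [Complex.arg_zero] at hlt
      linarith
    have hy0 : y ≠ 0 := by
      rintro rfl
      exact hy.false
    have hsin_neg : Real.sin (x.arg + y.arg) < 0 := by
      rw [← Real.sin_sub_two_pi]
      exact Real.sin_neg_of_neg_of_neg_pi_lt (by linarith) (by linarith)
    refine hx.not_gt (him.1 (hsin ▸ mul_neg_of_pos_of_neg ?_ hsin_neg))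
    exact mul_pos (norm_pos_iff.2 hx0) (norm_pos_iff.2 hy0)

theorem re_one_sub_mul_pos {α β : ℝ} (hα : 0 < α) (hβα : β ≤ α) {z : ℂ}
    (hz : 2 * (α * β) * z.re < α + β) : 0 < (1 - β * z).re := by
  rw [Complex.sub_re, Complex.one_re, Complex.re_ofReal_mul]
  have hmul : 0 < α * (1 - β * z.re) := by linarith
  exact (mul_pos_iff_of_pos_left hα).1 hmul

theorem one_sub_mul_mul_one_sub_mul_cpow {α β : ℝ} (hα : 0 < α) (hβα : β ≤ α) {z : ℂ}
    (hz : 2 * (α * β) * z.re < α + β) (s : ℂ) :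
    ((1 - α * z) * (1 - β * z)) ^ s = (1 - α * z) ^ s * (1 - β * z) ^ s := by
  have him_left : (1 - α * z).im = -(α * z.im) := by simp
  have him_mul : ((1 - α * z) * (1 - β * z)).im = -((α + β - 2 * (α * β) * z.re) * z.im) := by
    rw [Complex.mul_im, Complex.sub_re, Complex.sub_re, Complex.sub_im, Complex.sub_im,
      Complex.one_re, Complex.one_im, Complex.re_ofReal_mul, Complex.re_ofReal_mul,
      Complex.im_ofReal_mul, Complex.im_ofReal_mul]
    ring
  have him : ((1 - α * z) * (1 - β * z)).im < 0 ↔ (1 - α * z).im < 0 := by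
    rw [him_left, him_mul, neg_lt_zero, neg_lt_zero, mul_pos_iff_of_pos_left (sub_pos.2 hz),
      mul_pos_iff_of_pos_left hα]
  exact mul_cpow_of_arg_add_arg_mem_Ioc
    (arg_add_arg_mem_Ioc_of_im_mul_neg_iff (re_one_sub_mul_pos hα hβα hz) him) s

theorem ofReal_cpow_one_half {x : ℝ} (hx : 0 ≤ x) : (x : ℂ) ^ (1 / 2 : ℂ) = Real.sqrt x := by
  rw [Real.sqrt_eq_rpow, Complex.ofReal_cpow hx]
  norm_num

namespace Motzkin

/-- The jump polynomial `P(u) = p₋₁u⁻¹ + p₀ + p₁u`. -/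
noncomputable def jumpPolynomial (pm p0 p1 u : ℝ) : ℝ :=
  pm * u⁻¹ + p0 + p1 * u

/-- The saddle point `τ`, that is, the positive zero of `P'`. -/
noncomputable def saddlePoint (pm p1 : ℝ) : ℝ :=
  Real.sqrt (pm / p1)

/-- The dominant singularity `ρ = 1 / P(τ)` of the small branch, in terms of the weights
(see `jumpPolynomial_saddlePoint`). -/
noncomputable def dominantSingularity (pm p0 p1 : ℝ) : ℝ :=
  1 / (p0 + 2 * Real.sqrt (pm * p1))

/-- The constant `C = √(2P(τ)/P''(τ))` in front of the square-root singularity, where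
`P''(u) = 2p₋₁/u³`. -/
noncomputable def singularityConstant (pm p0 p1 : ℝ) : ℝ :=
  Real.sqrt (2 * jumpPolynomial pm p0 p1 (saddlePoint pm p1) /
    (2 * pm / saddlePoint pm p1 ^ 3))

/-- The small branch `u₁` of the kernel equation `1 - zP(u) = 0`, with the principal root. -/
noncomputable def smallBranch (pm p0 p1 : ℝ) (z : ℂ) : ℂ :=
  (1 - (p0 : ℂ) * z -
    ((1 - (p0 : ℂ) * z) ^ 2 - 4 * (pm : ℂ) * (p1 : ℂ) * z ^ 2) ^ (1 / 2 : ℂ)) /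
  (2 * (p1 : ℂ) * z)

/-- The region `D'(Re z) < 0`, where `D(z) = (1 - p₀z)² - 4p₋₁p₁z²` is the discriminant of the
kernel equation, without the common pole `0` of the coefficients `a` and `b`. -/
def decompositionDomain (pm p0 p1 : ℝ) : Set ℂ :=
  {z | z ≠ 0 ∧ (p0 ^ 2 - 4 * (pm * p1)) * z.re < p0}

/-- The analytic summand `a` in `u₁(z) = a(z) + b(z)√(1 - z/ρ)`. -/
noncomputable def regularPart (p0 p1 : ℝ) (z : ℂ) : ℂ :=
  (1 - p0 * z) / (2 * p1 * z)

/-- The analytic coefficient `b` in `u₁(z) = a(z) + b(z)√(1 - z/ρ)`. -/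
noncomputable def sqrtCoefficient (pm p0 p1 : ℝ) (z : ℂ) : ℂ :=
  -(1 - (p0 - 2 * Real.sqrt (pm * p1) : ℝ) * z) ^ (1 / 2 : ℂ) / (2 * p1 * z)

variable {pm p0 p1 : ℝ}

theorem mul_saddlePoint (hp1 : 0 < p1) : p1 * saddlePoint pm p1 = Real.sqrt (pm * p1) := by
  rw [saddlePoint, show pm * p1 = p1 ^ 2 * (pm / p1) by field_simp,
    Real.sqrt_mul (sq_nonneg p1), Real.sqrt_sq hp1.le]

theorem saddlePoint_pos (hpm : 0 < pm) (hp1 : 0 < p1) : 0 < saddlePoint pm p1 :=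
  Real.sqrt_pos.2 (div_pos hpm hp1)

theorem mul_saddlePoint_sq (hpm : 0 < pm) (hp1 : 0 < p1) : p1 * saddlePoint pm p1 ^ 2 = pm := by
  rw [saddlePoint, Real.sq_sqrt (div_pos hpm hp1).le, mul_div_cancel₀ pm hp1.ne']

theorem jumpPolynomial_saddlePoint (hpm : 0 < pm) (hp1 : 0 < p1) :
    jumpPolynomial pm p0 p1 (saddlePoint pm p1) = p0 + 2 * Real.sqrt (pm * p1) := by
  have hτ := (saddlePoint_pos hpm hp1).ne'
  have hdown : pm * (saddlePoint pm p1)⁻¹ = p1 * saddlePoint pm p1 := by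
    rw [mul_inv_eq_iff_eq_mul₀ hτ, mul_assoc, ← sq, mul_saddlePoint_sq hpm hp1]
  rw [jumpPolynomial, hdown, mul_saddlePoint hp1]
  ring

theorem singularityConstant_eq (hpm : 0 < pm) (hp1 : 0 < p1)
    (hp0 : 0 < p0 + 2 * Real.sqrt (pm * p1)) :
    singularityConstant pm p0 p1 =
      Real.sqrt (4 * Real.sqrt (pm * p1) * dominantSingularity pm p0 p1) /
        (2 * p1 * dominantSingularity pm p0 p1) := by
  have hτ := saddlePoint_pos hpm hp1
  have hsecond : 2 * pm / saddlePoint pm p1 ^ 3 = 2 * p1 / saddlePoint pm p1 := by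
    rw [div_eq_div_iff (by positivity) hτ.ne']
    linear_combination -2 * saddlePoint pm p1 * mul_saddlePoint_sq hpm hp1
  have hsq : 2 * (p0 + 2 * Real.sqrt (pm * p1)) / (2 * p1 / saddlePoint pm p1) =
      4 * Real.sqrt (pm * p1) * dominantSingularity pm p0 p1 /
        (2 * p1 * dominantSingularity pm p0 p1) ^ 2 := by
    rw [dominantSingularity]
    nth_rewrite 2 [← mul_saddlePoint hp1]
    field_simp
    ring
  have hρ : 0 < dominantSingularity pm p0 p1 := one_div_pos.2 hp0
  rw [singularityConstant, jumpPolynomial_saddlePoint hpm hp1, hsecond, hsq,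
    Real.sqrt_div' _ (sq_nonneg _), Real.sqrt_sq (by positivity)]

theorem mul_dominantSingularity (hp0 : 0 < p0 + 2 * Real.sqrt (pm * p1)) :
    (p0 + 2 * Real.sqrt (pm * p1)) * dominantSingularity pm p0 p1 = 1 :=
  mul_one_div_cancel hp0.ne'

theorem regularPart_dominantSingularity (hp1 : 0 < p1)
    (hp0 : 0 < p0 + 2 * Real.sqrt (pm * p1)) :
    regularPart p0 p1 (dominantSingularity pm p0 p1) = saddlePoint pm p1 := by
  have hρ : 0 < dominantSingularity pm p0 p1 := one_div_pos.2 hp0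
  have hreal : (1 - p0 * dominantSingularity pm p0 p1) / (2 * p1 * dominantSingularity pm p0 p1) =
      saddlePoint pm p1 := by
    rw [div_eq_iff (by positivity)]
    linear_combination -mul_dominantSingularity hp0 -
      2 * dominantSingularity pm p0 p1 * mul_saddlePoint (pm := pm) hp1
  rw [regularPart]
  exact_mod_cast hreal

theorem sqrtCoefficient_dominantSingularity (hpm : 0 < pm) (hp1 : 0 < p1)
    (hp0 : 0 < p0 + 2 * Real.sqrt (pm * p1)) :
    sqrtCoefficient pm p0 p1 (dominantSingularity pm p0 p1) =
      (-singularityConstant pm p0 p1 : ℝ) := by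
  have hρ : 0 < dominantSingularity pm p0 p1 := one_div_pos.2 hp0
  have hbase : 1 - (p0 - 2 * Real.sqrt (pm * p1)) * dominantSingularity pm p0 p1 =
      4 * Real.sqrt (pm * p1) * dominantSingularity pm p0 p1 := by
    linear_combination -mul_dominantSingularity hp0
  have hroot : (1 - (p0 - 2 * Real.sqrt (pm * p1) : ℝ) * (dominantSingularity pm p0 p1 : ℂ)) ^
      (1 / 2 : ℂ) = Real.sqrt (4 * Real.sqrt (pm * p1) * dominantSingularity pm p0 p1) := by
    rw [← ofReal_cpow_one_half (by positivity), ← hbase]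
    push_cast
    rfl
  rw [sqrtCoefficient, hroot, singularityConstant_eq hpm hp1 hp0]
  push_cast
  rw [neg_div]

theorem sq_sub_mul_eq_mul (h : 0 ≤ pm * p1) :
    p0 ^ 2 - 4 * (pm * p1) =
      (p0 + 2 * Real.sqrt (pm * p1)) * (p0 - 2 * Real.sqrt (pm * p1)) := by
  linear_combination 4 * Real.sq_sqrt h

theorem discriminant_eq_mul (h : 0 ≤ pm * p1) (z : ℂ) :
    (1 - (p0 : ℂ) * z) ^ 2 - 4 * (pm : ℂ) * (p1 : ℂ) * z ^ 2 =
      (1 - (p0 + 2 * Real.sqrt (pm * p1) : ℝ) * z) *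
        (1 - (p0 - 2 * Real.sqrt (pm * p1) : ℝ) * z) := by
  have hsq : (Real.sqrt (pm * p1) : ℂ) ^ 2 = pm * p1 := by exact_mod_cast Real.sq_sqrt h
  push_cast
  linear_combination 4 * z ^ 2 * hsq

theorem isOpen_decompositionDomain : IsOpen (decompositionDomain pm p0 p1) :=
  isOpen_ne.inter (isOpen_lt (continuous_const.mul Complex.continuous_re) continuous_const)

theorem dominantSingularity_mem_decompositionDomain (hpm : 0 < pm) (hp1 : 0 < p1)
    (hp0 : 0 < p0 + 2 * Real.sqrt (pm * p1)) :
    (dominantSingularity pm p0 p1 : ℂ) ∈ decompositionDomain pm p0 p1 := by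
  have hs : 0 < Real.sqrt (pm * p1) := Real.sqrt_pos.2 (mul_pos hpm hp1)
  refine ⟨Complex.ofReal_ne_zero.2 (one_div_pos.2 hp0).ne', ?_⟩
  rw [Complex.ofReal_re, sq_sub_mul_eq_mul (mul_pos hpm hp1).le, mul_right_comm,
    mul_dominantSingularity hp0]
  linarith

theorem two_mul_mul_re_lt_of_mem_decompositionDomain (h : 0 ≤ pm * p1) {z : ℂ}
    (hz : z ∈ decompositionDomain pm p0 p1) :
    2 * ((p0 + 2 * Real.sqrt (pm * p1)) * (p0 - 2 * Real.sqrt (pm * p1))) * z.re <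
      (p0 + 2 * Real.sqrt (pm * p1)) + (p0 - 2 * Real.sqrt (pm * p1)) := by
  rw [← sq_sub_mul_eq_mul h]
  linarith [hz.2]

theorem analyticOnNhd_regularPart (hp1 : 0 < p1) :
    AnalyticOnNhd ℂ (regularPart p0 p1) (decompositionDomain pm p0 p1) := by
  rintro z ⟨hz, -⟩
  have hden : 2 * (p1 : ℂ) * z ≠ 0 := by simp [hz, hp1.ne']
  unfold regularPart
  fun_prop (disch := assumption)

theorem analyticOnNhd_sqrtCoefficient (hpm : 0 < pm) (hp1 : 0 < p1)
    (hp0 : 0 < p0 + 2 * Real.sqrt (pm * p1)) :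
    AnalyticOnNhd ℂ (sqrtCoefficient pm p0 p1) (decompositionDomain pm p0 p1) := by
  intro z hz
  have hden : 2 * (p1 : ℂ) * z ≠ 0 := by simp [hz.1, hp1.ne']
  have hslit : 1 - (p0 - 2 * Real.sqrt (pm * p1) : ℝ) * z ∈ Complex.slitPlane :=
    Or.inl (re_one_sub_mul_pos hp0 (by linarith [Real.sqrt_nonneg (pm * p1)])
      (two_mul_mul_re_lt_of_mem_decompositionDomain (mul_pos hpm hp1).le hz))
  unfold sqrtCoefficient
  fun_prop (disch := assumption)

theorem smallBranch_eq (hpm : 0 < pm) (hp1 : 0 < p1) (hp0 : 0 < p0 + 2 * Real.sqrt (pm * p1))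
    {z : ℂ} (hz : z ∈ decompositionDomain pm p0 p1) :
    smallBranch pm p0 p1 z = regularPart p0 p1 z +
      sqrtCoefficient pm p0 p1 z * (1 - z / dominantSingularity pm p0 p1) ^ (1 / 2 : ℂ) := by
  have hdiv : z / dominantSingularity pm p0 p1 = (p0 + 2 * Real.sqrt (pm * p1) : ℝ) * z := by
    rw [dominantSingularity, Complex.ofReal_div, Complex.ofReal_one, div_div_eq_mul_div, div_one,
      mul_comm]
  have hpos := (mul_pos hpm hp1).le
  rw [smallBranch, discriminant_eq_mul hpos, one_sub_mul_mul_one_sub_mul_cpow hp0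
    (by linarith [Real.sqrt_nonneg (pm * p1)])
    (two_mul_mul_re_lt_of_mem_decompositionDomain hpos hz), hdiv, regularPart, sqrtCoefficient]
  ring

end Motzkin

open Motzkin in
/-- On the ray `(ρ, ∞)` both square roots take their values on the cut, where the principal
argument is `π`. -/
theorem small_branch_decomposition_general {pm p0 p1 : ℝ} (hpm : 0 < pm)
    (hp0 : 0 < p0 + 2 * Real.sqrt (pm * p1)) (hp1 : 0 < p1) :
    ∃ U : Set ℂ, IsOpen U ∧ (dominantSingularity pm p0 p1 : ℂ) ∈ U ∧
      ∃ a b : ℂ → ℂ, AnalyticOnNhd ℂ a U ∧ AnalyticOnNhd ℂ b U ∧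
        a (dominantSingularity pm p0 p1) = saddlePoint pm p1 ∧
        b (dominantSingularity pm p0 p1) = (-singularityConstant pm p0 p1 : ℝ) ∧
        ∀ z ∈ U, smallBranch pm p0 p1 z =
          a z + b z * (1 - z / dominantSingularity pm p0 p1) ^ (1 / 2 : ℂ) :=
  ⟨decompositionDomain pm p0 p1, isOpen_decompositionDomain,
    dominantSingularity_mem_decompositionDomain hpm hp1 hp0,
    regularPart p0 p1, sqrtCoefficient pm p0 p1,
    analyticOnNhd_regularPart hp1, analyticOnNhd_sqrtCoefficient hpm hp1 hp0,
    regularPart_dominantSingularity hp1 hp0, sqrtCoefficient_dominantSingularity hpm hp1 hp0,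
    fun _ hz => smallBranch_eq hpm hp1 hp0 hz⟩

/-- **Square-root singularity of the small branch** (Proposition: local representation
`u₁(z) = a(z) + b(z)√(1-z/ρ)` near `ρ` with `a(ρ) = τ`, `b(ρ) = -C`). -/
theorem small_branch_decomposition (pm p0 p1 : ℝ)
    (hpm : 0 < pm) (hp0 : 0 < p0) (hp1 : 0 < p1) :
    let τ : ℝ := Real.sqrt (pm / p1)
    let Pτ : ℝ := pm * τ⁻¹ + p0 + p1 * τ
    let ρ : ℝ := 1 / (p0 + 2 * Real.sqrt (pm * p1))
    let C : ℝ := Real.sqrt (2 * Pτ / (2 * pm / τ ^ 3))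
    let u₁ : ℂ → ℂ := fun z =>
      (1 - (p0 : ℂ) * z -
        ((1 - (p0 : ℂ) * z) ^ 2 - 4 * (pm : ℂ) * (p1 : ℂ) * z ^ 2) ^ (1/2 : ℂ)) /
      (2 * (p1 : ℂ) * z)
    ∃ U : Set ℂ, IsOpen U ∧ (ρ : ℂ) ∈ U ∧
      ∃ a b : ℂ → ℂ, AnalyticOnNhd ℂ a U ∧ AnalyticOnNhd ℂ b U ∧
        a ρ = (τ : ℂ) ∧ b ρ = (-C : ℝ) ∧
        ∀ z ∈ U, (¬ ∃ t : ℝ, ρ ≤ t ∧ z = (t : ℂ)) →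
          u₁ z = a z + b z * (1 - z / (ρ : ℂ)) ^ (1/2 : ℂ) := by
  intro τ Pτ ρ C u₁
  obtain ⟨U, hU, hρ, a, b, ha, hb, haρ, hbρ, hu⟩ :=
    small_branch_decomposition_general hpm (p0 := p0) (by positivity) hp1
  exact ⟨U, hU, hρ, a, b, ha, hb, haρ, hbρ, fun z hz _ => hu z hz⟩
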